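/- Classical inf-sup bound for the quasi-optimality constant: let P : V → S be the linear map determined by b(P v, σ) = ⟪v, E σ⟫ for all v ∈ V, σ ∈ S, and assume b(u, σ) = ⟪u, E σ⟫ for all u ∈ S ∩ V, σ ∈ S. Set C_β := sup { ⟪v, E σ⟫ + b(s,σ) : v ∈ V, s ∈ S, σ ∈ S, ‖v + s‖ = 1, ‖σ‖ = 1 } and β := inf_{s ∈ S, ‖s‖ = 1} sup_{σ ∈ S, ‖σ‖ = 1} b(s,σ). Then the quasi-optimality constant satisfies Cqopt ≤ C_β / β. -/

import Mathlib

open scoped RealInnerProductSpace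

/-!
On `V + S` the map `Q (v + s) = P v + s` is a well-defined bounded projection onto `S`, because the
quasi-optimality of `P` forces `P u = u` on `V ∩ S`. The best quasi-optimality constant is the norm
of `1 - Q`, and in an inner product space `‖1 - Q‖ = ‖Q‖` (Kato) since the angle between two lines
is symmetric. Finally `b (Q x, σ)` is the form whose norm is `C_β`, so the inf-sup condition
`β ‖Q x‖ ≤ ‖b (Q x, ·)‖ ≤ C_β ‖x‖` gives `‖Q‖ ≤ C_β / β`. A bound `‖Q‖ ≤ M`
reads `‖P v + s‖ ≤ M ‖v + s‖` for all `v` and `s`, so `Q` need not be constructed.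
-/

theorem sSup_nonneg_of_forall_neg_mem {A : Set ℝ} (hA : ∀ c ∈ A, -c ∈ A) : 0 ≤ sSup A := by
  rcases A.eq_empty_or_nonempty with rfl | ⟨c, hc⟩
  · exact Real.sSup_empty.ge
  · rcases le_total 0 c with h | h
    · exact Real.sSup_nonneg' ⟨c, hc, h⟩
    · exact Real.sSup_nonneg' ⟨-c, hA c hc, neg_nonneg.2 h⟩

section InfSup

variable {F G : Type*} [NormedAddCommGroup F] [NormedSpace ℝ F]
  [NormedAddCommGroup G] [NormedSpace ℝ G]

theorem sSup_unitSphere_eq_opNorm (φ : G →L[ℝ] ℝ) :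
    sSup {c : ℝ | ∃ σ : G, ‖σ‖ = 1 ∧ c = φ σ} = ‖φ‖ := by
  have hle : ∀ c ∈ {c : ℝ | ∃ σ : G, ‖σ‖ = 1 ∧ c = φ σ}, c ≤ ‖φ‖ := by
    rintro c ⟨σ, hσ, rfl⟩
    exact (le_abs_self _).trans (φ.unit_le_opNorm σ hσ.le)
  have hneg : ∀ c ∈ {c : ℝ | ∃ σ : G, ‖σ‖ = 1 ∧ c = φ σ},
      -c ∈ {c : ℝ | ∃ σ : G, ‖σ‖ = 1 ∧ c = φ σ} := by
    rintro c ⟨σ, hσ, rfl⟩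
    exact ⟨-σ, by rwa [norm_neg], (map_neg φ σ).symm⟩
  refine le_antisymm (Real.sSup_le hle (norm_nonneg φ)) ?_
  refine φ.opNorm_le_of_unit_norm (sSup_nonneg_of_forall_neg_mem hneg) fun σ hσ => ?_
  exact abs_le'.2 ⟨le_csSup ⟨_, hle⟩ ⟨σ, hσ, rfl⟩, le_csSup ⟨_, hle⟩ (hneg _ ⟨σ, hσ, rfl⟩)⟩

/-- The inf-sup (Babuška–Brezzi) constant `β` of a bounded bilinear form, which quantifies its
nondegeneracy in the trial variable `s`. It is the junk value `0` if `F` is trivial. -/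
noncomputable def infSupConstant (b : F →L[ℝ] G →L[ℝ] ℝ) : ℝ :=
  sInf {r : ℝ | ∃ s : F, ‖s‖ = 1 ∧ r = sSup {c : ℝ | ∃ σ : G, ‖σ‖ = 1 ∧ c = b s σ}}

theorem infSupConstant_eq_sInf_opNorm (b : F →L[ℝ] G →L[ℝ] ℝ) :
    infSupConstant b = sInf {r : ℝ | ∃ s : F, ‖s‖ = 1 ∧ r = ‖b s‖} := by
  simp only [infSupConstant, sSup_unitSphere_eq_opNorm]

theorem infSupConstant_mul_norm_le (b : F →L[ℝ] G →L[ℝ] ℝ) (s : F) :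
    infSupConstant b * ‖s‖ ≤ ‖b s‖ := by
  rcases eq_or_ne s 0 with rfl | hs
  · simp only [norm_zero, mul_zero, map_zero, le_refl]
  have hbdd : BddBelow {r : ℝ | ∃ s : F, ‖s‖ = 1 ∧ r = ‖b s‖} := by
    refine ⟨0, ?_⟩
    rintro r ⟨t, -, rfl⟩
    exact norm_nonneg _
  rw [← le_div_iff₀ (norm_pos_iff.2 hs), infSupConstant_eq_sInf_opNorm]
  refine csInf_le hbdd ⟨‖s‖⁻¹ • s, norm_smul_inv_norm (𝕜 := ℝ) hs, ?_⟩
  rw [map_smul, norm_smul, norm_inv, norm_norm, inv_mul_eq_div]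

theorem nontrivial_of_infSupConstant_pos {b : F →L[ℝ] G →L[ℝ] ℝ} (hb : 0 < infSupConstant b) :
    Nontrivial F := by
  by_contra hF
  have := not_nontrivial_iff_subsingleton.1 hF
  have hempty : {r : ℝ | ∃ s : F, ‖s‖ = 1 ∧ r = ‖b s‖} = ∅ := by
    refine Set.eq_empty_of_forall_notMem ?_
    rintro r ⟨s, hs, -⟩
    exact zero_ne_one ((norm_of_subsingleton s).symm.trans hs)
  rw [infSupConstant_eq_sInf_opNorm, hempty, Real.sInf_empty] at hb
  exact hb.false

theorem infSupConstant_pos [FiniteDimensional ℝ F] [Nontrivial F] (b : F →L[ℝ] G →L[ℝ] ℝ)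
    (hb : ∀ s : F, (∀ σ : G, b s σ = 0) → s = 0) : 0 < infSupConstant b := by
  have hker : LinearMap.ker b.toLinearMap = ⊥ :=
    LinearMap.ker_eq_bot'.2 fun s hs => hb s (DFunLike.congr_fun hs)
  obtain ⟨K, hK, hanti⟩ := b.toLinearMap.exists_antilipschitzWith hker
  have hK' : (0 : ℝ) < K := NNReal.coe_pos.2 hK
  obtain ⟨e, he⟩ := exists_norm_eq F (zero_le_one' ℝ)
  rw [infSupConstant_eq_sInf_opNorm]
  refine (inv_pos.2 hK').trans_le (le_csInf ⟨_, e, he, rfl⟩ ?_)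
  rintro r ⟨s, hs, rfl⟩
  have h : ‖s‖ ≤ K * ‖b s‖ := hanti.le_mul_norm (map_zero _) s
  rwa [inv_le_iff_one_le_mul₀' hK', ← hs]

end InfSup

section Extension

variable {X : Type*} [NormedAddCommGroup X] [NormedSpace ℝ X] {V S : Submodule ℝ X}
  {P : V →ₗ[ℝ] S}

theorem norm_map_add_le_of_quasiOptimal {C : ℝ}
    (hC : ∀ v : V, ‖(v : X) - (P v : X)‖ ≤ C * Metric.infDist (v : X) (S : Set X))
    (v : V) (s : S) : ‖P v + s‖ ≤ (1 + |C|) * ‖(v : X) + (s : X)‖ := by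
  have hdist : Metric.infDist (v : X) (S : Set X) ≤ ‖(v : X) + (s : X)‖ := by
    have h := Metric.infDist_le_dist_of_mem (x := (v : X)) (S.neg_mem s.2)
    rwa [dist_eq_norm, sub_neg_eq_add] at h
  have hsub : ‖(v : X) - (P v : X)‖ ≤ |C| * ‖(v : X) + (s : X)‖ :=
    (hC v).trans (mul_le_mul (le_abs_self C) hdist Metric.infDist_nonneg (abs_nonneg C))
  calc ‖P v + s‖ = ‖((v : X) + (s : X)) - ((v : X) - (P v : X))‖ := by
        rw [add_sub_sub_cancel, add_comm (s : X), ← Submodule.coe_add, Submodule.norm_coe]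
    _ ≤ ‖(v : X) + (s : X)‖ + ‖(v : X) - (P v : X)‖ := norm_sub_le _ _
    _ ≤ (1 + |C|) * ‖(v : X) + (s : X)‖ := by linarith

theorem one_le_of_norm_map_add_le [Nontrivial S] {M : ℝ}
    (hM : ∀ (v : V) (s : S), ‖P v + s‖ ≤ M * ‖(v : X) + (s : X)‖) : 1 ≤ M := by
  obtain ⟨e, he⟩ := exists_norm_eq S (zero_le_one' ℝ)
  have h := hM 0 e
  rwa [map_zero, zero_add, Submodule.coe_zero, zero_add, Submodule.norm_coe, he, mul_one] at h

end Extension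

section Kato

variable {X : Type*} [NormedAddCommGroup X] [InnerProductSpace ℝ X]

theorem norm_smul_add_inv_smul_eq {p q : X} (hp : p ≠ 0) (hq : q ≠ 0) :
    ‖(‖q‖ / ‖p‖) • p + (‖q‖ / ‖p‖)⁻¹ • q‖ = ‖p + q‖ := by
  have hp' : ‖p‖ ≠ 0 := norm_ne_zero_iff.2 hp
  have hq' : ‖q‖ ≠ 0 := norm_ne_zero_iff.2 hq
  rw [← sq_eq_sq₀ (norm_nonneg _) (norm_nonneg _), norm_add_sq_real, norm_add_sq_real,
    norm_smul, norm_smul, real_inner_smul_left, real_inner_smul_right, norm_inv, norm_div,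
    norm_norm, norm_norm]
  field_simp
  ring

/-- Two-dimensional form of Kato's identity `‖1 - Q‖ = ‖Q‖`, with `Q` the projection onto the line
of `p` along the line of `q`. -/
theorem norm_right_le_of_forall_norm_smul_le {p q : X} {M : ℝ} (hM : 1 ≤ M)
    (h : ∀ c d : ℝ, ‖c • p‖ ≤ M * ‖c • p + d • q‖) : ‖q‖ ≤ M * ‖p + q‖ := by
  rcases eq_or_ne q 0 with rfl | hq
  · rw [norm_zero]
    positivity
  rcases eq_or_ne p 0 with rfl | hp
  · rw [zero_add]
    exact le_mul_of_one_le_left (norm_nonneg q) hM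
  calc ‖q‖ = ‖(‖q‖ / ‖p‖) • p‖ := by
        rw [norm_smul, norm_div, norm_norm, norm_norm, div_mul_cancel₀ _ (norm_ne_zero_iff.2 hp)]
    _ ≤ M * ‖(‖q‖ / ‖p‖) • p + (‖q‖ / ‖p‖)⁻¹ • q‖ := h _ _
    _ = M * ‖p + q‖ := by rw [norm_smul_add_inv_smul_eq hp hq]

variable {V S : Submodule ℝ X} {P : V →ₗ[ℝ] S} {M : ℝ}

theorem norm_sub_le_of_norm_map_add_le [Nontrivial S]
    (hM : ∀ (v : V) (s : S), ‖P v + s‖ ≤ M * ‖(v : X) + (s : X)‖) (v : V) (s : S) :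
    ‖(v : X) - (P v : X)‖ ≤ M * ‖(v : X) + (s : X)‖ := by
  have hline : ∀ c d : ℝ, ‖c • ((P v : X) + s)‖ ≤
      M * ‖c • ((P v : X) + s) + d • ((v : X) - P v)‖ := by
    intro c d
    have h := hM (d • v) (c • (P v + s) - d • P v)
    rw [map_smul, add_sub_cancel, ← Submodule.norm_coe] at h
    push_cast at h
    convert h using 3
    module
  have h := norm_right_le_of_forall_norm_smul_le (one_le_of_norm_map_add_le hM) hline
  rwa [add_comm (P v : X), add_add_sub_cancel, add_comm (s : X)] at h

theorem norm_sub_le_mul_infDist [Nontrivial S]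
    (hM : ∀ (v : V) (s : S), ‖P v + s‖ ≤ M * ‖(v : X) + (s : X)‖) (v : V) :
    ‖(v : X) - (P v : X)‖ ≤ M * Metric.infDist (v : X) (S : Set X) := by
  have hM_pos : 0 < M := one_pos.trans_le (one_le_of_norm_map_add_le hM)
  rw [← div_le_iff₀' hM_pos, Metric.le_infDist ⟨0, S.zero_mem⟩]
  intro s hs
  rw [div_le_iff₀' hM_pos, dist_eq_norm, sub_eq_add_neg (v : X) s]
  exact norm_sub_le_of_norm_map_add_le hM v ⟨-s, S.neg_mem hs⟩

end Kato

section ContinuityConstant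

variable {X G : Type*} [NormedAddCommGroup X] [NormedSpace ℝ X]
  [NormedAddCommGroup G] [NormedSpace ℝ G] {V S : Submodule ℝ X}

/-- The continuity constant `C_β` of the form `(v + s, σ) ↦ a v σ + b s σ` on `(V + S) × G`; in the
smoothed method, `a v σ = ⟪v, E σ⟫`. The supremum is the junk value `0` when the form is
unbounded. -/
noncomputable def continuityConstant (a : V → G → ℝ) (b : S →L[ℝ] G →L[ℝ] ℝ) : ℝ :=
  sSup {c : ℝ | ∃ (v : V) (s : S) (σ : G),
    ‖(v : X) + (s : X)‖ = 1 ∧ ‖σ‖ = 1 ∧ c = a v σ + b s σ}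

variable {a : V → G → ℝ} {b : S →L[ℝ] G →L[ℝ] ℝ} {P : V →ₗ[ℝ] S}

theorem continuityConstant_eq_sSup_map_add (hP : ∀ (v : V) (σ : G), b (P v) σ = a v σ) :
    continuityConstant a b = sSup {c : ℝ | ∃ (v : V) (s : S) (σ : G),
      ‖(v : X) + (s : X)‖ = 1 ∧ ‖σ‖ = 1 ∧ c = b (P v + s) σ} := by
  simp only [continuityConstant, ← hP, map_add, add_apply]

theorem continuityConstant_nonneg (hP : ∀ (v : V) (σ : G), b (P v) σ = a v σ) :
    0 ≤ continuityConstant a b := by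
  rw [continuityConstant_eq_sSup_map_add hP]
  refine sSup_nonneg_of_forall_neg_mem ?_
  rintro c ⟨v, s, σ, hx, hσ, rfl⟩
  exact ⟨v, s, -σ, hx, by rwa [norm_neg], (map_neg _ _).symm⟩

variable {K : ℝ}

theorem apply_map_add_le_continuityConstant (hP : ∀ (v : V) (σ : G), b (P v) σ = a v σ)
    (hK : ∀ (v : V) (s : S), ‖P v + s‖ ≤ K * ‖(v : X) + (s : X)‖) {v : V} {s : S} {σ : G}
    (hx : ‖(v : X) + (s : X)‖ = 1) (hσ : ‖σ‖ = 1) :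
    b (P v + s) σ ≤ continuityConstant a b := by
  rw [continuityConstant_eq_sSup_map_add hP]
  refine le_csSup ⟨‖b‖ * K, ?_⟩ ⟨v, s, σ, hx, hσ, rfl⟩
  rintro c ⟨v, s, σ, hx, hσ, rfl⟩
  calc b (P v + s) σ ≤ ‖b (P v + s) σ‖ := Real.le_norm_self _
    _ ≤ ‖b‖ * ‖P v + s‖ * ‖σ‖ := b.le_opNorm₂ _ _
    _ ≤ ‖b‖ * (K * ‖(v : X) + (s : X)‖) * ‖σ‖ := by gcongr; exact hK v s
    _ = ‖b‖ * K := by rw [hx, hσ, mul_one, mul_one]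

theorem opNorm_map_add_le_continuityConstant_mul (hP : ∀ (v : V) (σ : G), b (P v) σ = a v σ)
    (hK : ∀ (v : V) (s : S), ‖P v + s‖ ≤ K * ‖(v : X) + (s : X)‖) (v : V) (s : S) :
    ‖b (P v + s)‖ ≤ continuityConstant a b * ‖(v : X) + (s : X)‖ := by
  rcases eq_or_ne ((v : X) + (s : X)) 0 with hx | hx
  · have hPvs : P v + s = 0 := by
      simpa only [hx, norm_zero, mul_zero, norm_le_zero_iff] using hK v s
    rw [hPvs, map_zero, norm_zero, hx, norm_zero, mul_zero]
  rw [← sSup_unitSphere_eq_opNorm]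
  refine Real.sSup_le ?_ (mul_nonneg (continuityConstant_nonneg hP) (norm_nonneg _))
  rintro c ⟨σ, hσ, rfl⟩
  set r : ℝ := ‖(v : X) + (s : X)‖
  have hunit : ‖((r⁻¹ • v : V) : X) + ((r⁻¹ • s : S) : X)‖ = 1 := by
    rw [Submodule.coe_smul, Submodule.coe_smul, ← smul_add]
    exact norm_smul_inv_norm (𝕜 := ℝ) hx
  have h := apply_map_add_le_continuityConstant hP hK hunit hσ
  rwa [map_smul, ← smul_add, map_smul, smul_apply, smul_eq_mul,
    inv_mul_le_iff₀' (norm_pos_iff.2 hx)] at h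

end ContinuityConstant

theorem quasiOptimality_constant_le_classical_bound_general
    {X G : Type*} [NormedAddCommGroup X] [InnerProductSpace ℝ X]
    [NormedAddCommGroup G] [NormedSpace ℝ G] {V S : Submodule ℝ X}
    {a : V → G → ℝ} {b : S →L[ℝ] G →L[ℝ] ℝ} (hb : 0 < infSupConstant b)
    {P : V →ₗ[ℝ] S} (hP : ∀ (v : V) (σ : G), b (P v) σ = a v σ) {Cqopt : ℝ}
    (hCqopt : IsLeast {C : ℝ | ∀ v : V,
        ‖(v : X) - (P v : X)‖ ≤ C * Metric.infDist (v : X) (S : Set X)} Cqopt) :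
    Cqopt ≤ continuityConstant a b / infSupConstant b := by
  have := nontrivial_of_infSupConstant_pos hb
  have hK := norm_map_add_le_of_quasiOptimal hCqopt.1
  refine hCqopt.2 (norm_sub_le_mul_infDist fun v s => ?_)
  rw [div_mul_eq_mul_div, le_div_iff₀' hb]
  exact (infSupConstant_mul_norm_le b (P v + s)).trans
    (opNorm_map_add_le_continuityConstant_mul hP hK v s)

/-- **Classical inf-sup bound for the quasi-optimality constant.** Let `P : V → S` be
determined by `b(P v, σ) = ⟪v, E σ⟫`, and assume `b(u, σ) = ⟪u, E σ⟫` for all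
`u ∈ S ∩ V`, `σ ∈ S`. With the continuity constant
`C_β := sup {⟪v, E σ⟫ + b(s,σ) : ‖v + s‖ = 1, ‖σ‖ = 1}` and the inf-sup constant
`β := inf_{‖s‖=1} sup_{‖σ‖=1} b(s,σ)`, the quasi-optimality constant satisfies
`Cqopt ≤ C_β / β`. -/
theorem quasiOptimality_constant_le_classical_bound
    {X : Type*} [NormedAddCommGroup X] [InnerProductSpace ℝ X] [CompleteSpace X]
    (V S : Submodule ℝ X) [CompleteSpace V] [FiniteDimensional ℝ S]
    (hSne : S ≠ ⊥) (hsum : V ⊔ S = ⊤)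
    (b : S →ₗ[ℝ] S →ₗ[ℝ] ℝ) (hb : ∀ s : S, (∀ σ : S, b s σ = 0) → s = 0)
    (E : S →ₗ[ℝ] V)
    (P : V →ₗ[ℝ] S)
    (hP : ∀ (v : V) (σ : S), b (P v) σ = ⟪(v : X), ((E σ : V) : X)⟫)
    (hcons : ∀ u : S, (u : X) ∈ V → ∀ σ : S, b u σ = ⟪(u : X), ((E σ : V) : X)⟫)
    (Cβ : ℝ)
    (hCβ : Cβ = sSup {c : ℝ | ∃ (v : V) (s : S) (σ : S),
        ‖(v : X) + (s : X)‖ = 1 ∧ ‖σ‖ = 1 ∧ c = ⟪(v : X), ((E σ : V) : X)⟫ + b s σ})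
    (β : ℝ)
    (hβ : β = sInf {r : ℝ | ∃ s : S, ‖s‖ = 1 ∧
        r = sSup {c : ℝ | ∃ σ : S, ‖σ‖ = 1 ∧ c = b s σ}})
    (Cqopt : ℝ)
    (hCqopt : IsLeast {C : ℝ | ∀ v : V,
        ‖(v : X) - (P v : X)‖ ≤ C * Metric.infDist (v : X) (S : Set X)} Cqopt) :
    Cqopt ≤ Cβ / β := by
  have := Submodule.nontrivial_iff_ne_bot.2 hSne
  rw [hCβ, hβ]
  exact quasiOptimality_constant_le_classical_bound_general
    (infSupConstant_pos b.toContinuousBilinearMap hb) hP hCqopt
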